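/- Let E, F be Banach spaces, n ≥ 2 and 0 < p < ∞. Every fully (multiple) p-summing continuous n-linear map T : E × ⋯ × E → F is absolutely p-summing at every point: for every (a_1, …, a_n) ∈ E × ⋯ × E and all weakly p-summable sequences (x_j^{(k)})_{j=1}^∞ in E (k = 1, …, n), one has ∑_{j=1}^∞ ‖T(a_1 + x_j^{(1)}, …, a_n + x_j^{(n)}) − T(a_1, …, a_n)‖^p < ∞. -/

import Mathlib

open MeasureTheory

/-- Weak `ℓ_q` norm of a finite family in a normed space. -/
noncomputable def weakLpNorm (𝕜 : Type*) [RCLike 𝕜] {E : Type*} [NormedAddCommGroup E]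
    [NormedSpace 𝕜 E] (q : ℝ) {m : ℕ} (x : Fin m → E) : ℝ :=
  ⨆ φ : {φ : E →L[𝕜] 𝕜 // ‖φ‖ ≤ 1}, (∑ j, ‖φ.1 (x j)‖ ^ q) ^ (1 / q)

/-- `T` satisfies the `p`-semi-integral inequality with constant `C`, witnessed by a regular
Borel probability measure on the product of the closed dual unit balls with their
weak-star topologies. -/
def SemiIntegralWith (𝕜 : Type*) [RCLike 𝕜] {ι : Type*} [Fintype ι] {E : ι → Type*}
    [∀ i, NormedAddCommGroup (E i)] [∀ i, NormedSpace 𝕜 (E i)]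
    {F : Type*} [NormedAddCommGroup F]
    (p C : ℝ) (T : (∀ i, E i) → F) : Prop :=
  letI : MeasurableSpace (∀ i, {φ : WeakDual 𝕜 (E i) // ∀ z, ‖φ z‖ ≤ ‖z‖}) := borel _
  ∃ μ : Measure (∀ i, {φ : WeakDual 𝕜 (E i) // ∀ z, ‖φ z‖ ≤ ‖z‖}),
    IsProbabilityMeasure μ ∧ μ.Regular ∧
      ∀ x : ∀ i, E i,
        ‖T x‖ ≤ C * (∫ φ, ∏ i, ‖(φ i).1 (x i)‖ ^ p ∂μ) ^ (1 / p)

/-- The `si,p` norm: infimum of admissible constants. -/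
noncomputable def siNorm (𝕜 : Type*) [RCLike 𝕜] {ι : Type*} [Fintype ι] {E : ι → Type*}
    [∀ i, NormedAddCommGroup (E i)] [∀ i, NormedSpace 𝕜 (E i)]
    {F : Type*} [NormedAddCommGroup F]
    (p : ℝ) (T : (∀ i, E i) → F) : ℝ :=
  sInf {C : ℝ | 0 ≤ C ∧ SemiIntegralWith 𝕜 p C T}

/-- `T` is absolutely `(p; q₁,…,qₙ)`-summing with constant `C`. -/
def AbsSummingWith (𝕜 : Type*) [RCLike 𝕜] {ι : Type*} [Fintype ι] {E : ι → Type*}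
    [∀ i, NormedAddCommGroup (E i)] [∀ i, NormedSpace 𝕜 (E i)]
    {F : Type*} [NormedAddCommGroup F]
    (p : ℝ) (q : ι → ℝ) (C : ℝ) (T : (∀ i, E i) → F) : Prop :=
  ∀ (m : ℕ) (x : ∀ i, Fin m → E i),
    (∑ j, ‖T (fun i => x i j)‖ ^ p) ^ (1 / p) ≤ C * ∏ i, weakLpNorm 𝕜 (q i) (x i)

/-- `T` is `p`-dominated with constant `C`, witnessed by regular Borel probability measures
on the closed dual unit balls with their weak-star topologies. -/
def DominatedWith (𝕜 : Type*) [RCLike 𝕜] {ι : Type*} [Fintype ι] {E : ι → Type*}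
    [∀ i, NormedAddCommGroup (E i)] [∀ i, NormedSpace 𝕜 (E i)]
    {F : Type*} [NormedAddCommGroup F]
    (p C : ℝ) (T : (∀ i, E i) → F) : Prop :=
  letI : ∀ i, MeasurableSpace {φ : WeakDual 𝕜 (E i) // ∀ z, ‖φ z‖ ≤ ‖z‖} := fun i => borel _
  ∃ μ : ∀ i, Measure {φ : WeakDual 𝕜 (E i) // ∀ z, ‖φ z‖ ≤ ‖z‖},
    (∀ i, IsProbabilityMeasure (μ i)) ∧ (∀ i, (μ i).Regular) ∧
      ∀ x : ∀ i, E i,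
        ‖T x‖ ≤ C * ∏ i, (∫ φ, ‖φ.1 (x i)‖ ^ p ∂(μ i)) ^ (1 / p)

/-- `E` is an `𝓛_∞`-space. -/
def IsLinftySpace (𝕜 : Type*) [RCLike 𝕜] (E : Type*) [NormedAddCommGroup E]
    [NormedSpace 𝕜 E] : Prop :=
  ∃ lam : ℝ, 1 ≤ lam ∧ ∀ M : Submodule 𝕜 E, FiniteDimensional 𝕜 M →
    ∃ N : Submodule 𝕜 E, M ≤ N ∧ FiniteDimensional 𝕜 N ∧
      ∃ v : N ≃L[𝕜] (Fin (Module.finrank 𝕜 N) → 𝕜),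
        ‖(v : N →L[𝕜] (Fin (Module.finrank 𝕜 N) → 𝕜))‖ *
          ‖(v.symm : (Fin (Module.finrank 𝕜 N) → 𝕜) →L[𝕜] N)‖ ≤ lam

/-- `F` has cotype `q`. -/
def HasCotype (q : ℝ) (F : Type*) [NormedAddCommGroup F] : Prop :=
  ∃ C : ℝ, 0 ≤ C ∧ ∀ (m : ℕ) (x : Fin m → F),
    (∑ j, ‖x j‖ ^ q) ^ (1 / q) ≤
      C * ((∑ ε : Fin m → Bool, ‖∑ j, (if ε j then x j else -x j)‖ ^ (2 : ℝ)) / 2 ^ m)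
        ^ ((1 : ℝ) / 2)

/-!
Fully summing maps turn weakly summable families into a family that is summable over all
multi-indices `j = (j₁, …, jₙ)`, not only over the diagonal. Enlarge each family `(xⱼ⁽ᵏ⁾)ⱼ` by the
one extra term `aₖ`. By multilinearity `T (a + xⱼ) - T a` is a finite sum of values of `T` at `a`
with some coordinates `aₖ` replaced by `xⱼ⁽ᵏ⁾`; as at least one coordinate is replaced, each such
value is, as `j` varies, a subfamily of the multi-indexed family. The weak norms of the finite
subfamilies of a weakly summable family are uniformly bounded by a Banach–Steinhaus argument. It
appeals to Baire's theorem directly, because the `ℓ_p` norm is not a seminorm for `p < 1`.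
-/

section Summability

theorem norm_sub_rpow_le_two_rpow_mul {W : Type*} [SeminormedAddCommGroup W] {p : ℝ} (hp : 0 ≤ p)
    (v w : W) : ‖v - w‖ ^ p ≤ 2 ^ p * (‖v‖ ^ p + ‖w‖ ^ p) := by
  have add_rpow_le : ((‖v‖₊ + ‖w‖₊) ^ p : NNReal) ≤ 2 ^ p * (‖v‖₊ ^ p + ‖w‖₊ ^ p) := by
    have h := ENNReal.add_rpow_le_two_rpow_mul_rpow_add_rpow ‖v‖₊ ‖w‖₊ hp
    rw [← ENNReal.coe_ofNat] at h
    simpa only [← ENNReal.coe_add, ← ENNReal.coe_rpow_of_nonneg _ hp, ← ENNReal.coe_mul,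
      ENNReal.coe_le_coe] using h
  calc ‖v - w‖ ^ p ≤ (‖v‖ + ‖w‖) ^ p := by gcongr; exact norm_sub_le v w
    _ ≤ 2 ^ p * (‖v‖ ^ p + ‖w‖ ^ p) := mod_cast add_rpow_le

theorem summable_norm_sum_rpow {α κ F : Type*} [NormedAddCommGroup F] {p : ℝ} (hp : 0 < p)
    {s : Finset α} {f : α → κ → F} (hf : ∀ i ∈ s, Summable fun j => ‖f i j‖ ^ p) :
    Summable fun j => ‖∑ i ∈ s, f i j‖ ^ p := by
  have toReal_p : (ENNReal.ofReal p).toReal = p := ENNReal.toReal_ofReal hp.le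
  have memℓp_iff (g : κ → F) : Memℓp g (ENNReal.ofReal p) ↔ Summable fun j => ‖g j‖ ^ p := by
    rw [memℓp_gen_iff (toReal_p.symm ▸ hp), toReal_p]
  rw [← memℓp_iff]
  exact Memℓp.finsetSum s fun i hi => (memℓp_iff _).2 (hf i hi)

theorem summable_option_elim {κ M : Type*} [AddCommMonoid M] [TopologicalSpace M] [ContinuousAdd M]
    {f : κ → M} (hf : Summable f) (c : M) : Summable fun j : Option κ => j.elim c f :=
  let g (j : Option κ) : M := j.elim c f
  have hg_some : HasSum (g ∘ some) (∑' j, f j) := hf.hasSum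
  (((Option.some_injective κ).hasSum_range_iff.2 hg_some).add_isCompl (f := g)
    (Set.isCompl_range_some_none κ) (hasSum_unique _)).summable

theorem exists_nonempty_interior_setOf_forall_sum_le {X κ : Type*} [TopologicalSpace X]
    [BaireSpace X] [Nonempty X] {f : κ → X → ℝ} (hf : ∀ j, Continuous (f j))
    (f_nonneg : ∀ j x, 0 ≤ f j x) (hsum : ∀ x, Summable fun j => f j x) :
    ∃ K : ℝ, (interior {x | ∀ s : Finset κ, ∑ j ∈ s, f j x ≤ K}).Nonempty := by
  obtain ⟨N, hN⟩ := nonempty_interior_of_iUnion_of_closed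
    (f := fun N : ℕ => {x | ∀ s : Finset κ, ∑ j ∈ s, f j x ≤ N})
    (fun N => by
      simp only [Set.ofPred_forall]
      exact isClosed_iInter fun s =>
        isClosed_le (continuous_finsetSum s fun j _ => hf j) continuous_const)
    (Set.iUnion_eq_univ_iff.2 fun x => by
      obtain ⟨N, hN⟩ := exists_nat_ge (∑' j, f j x)
      exact ⟨N, fun s => ((hsum x).sum_le_tsum s fun j _ => f_nonneg j x).trans hN⟩)
  exact ⟨N, hN⟩

theorem exists_forall_norm_le_one_sum_norm_rpow_le {𝕜 V κ : Type*} [NontriviallyNormedField 𝕜]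
    [SeminormedAddCommGroup V] [NormedSpace 𝕜 V] [CompleteSpace V] {W : κ → Type*}
    [∀ j, SeminormedAddCommGroup (W j)] [∀ j, NormedSpace 𝕜 (W j)] {p : ℝ} (hp : 0 ≤ p)
    (u : ∀ j, V →L[𝕜] W j) (hu : ∀ v, Summable fun j => ‖u j v‖ ^ p) :
    ∃ K : ℝ, ∀ v, ‖v‖ ≤ 1 → ∀ s : Finset κ, ∑ j ∈ s, ‖u j v‖ ^ p ≤ K := by
  obtain ⟨K, v₀, hv₀⟩ := exists_nonempty_interior_setOf_forall_sum_le
    (f := fun j v => ‖u j v‖ ^ p) (fun j => (u j).continuous.norm.rpow_const fun _ => .inr hp)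
    (fun j v => by positivity) hu
  obtain ⟨r, hr, hball⟩ := Metric.mem_nhds_iff.1 (mem_interior_iff_mem_nhds.1 hv₀)
  obtain ⟨c, hc, hcr⟩ := NormedField.exists_norm_lt 𝕜 hr
  refine ⟨2 ^ p * (K + K) / ‖c‖ ^ p, fun v hv s => ?_⟩
  have hmem : v₀ + c • v ∈ Metric.ball v₀ r := by
    rw [mem_ball_iff_norm, add_sub_cancel_left, norm_smul]
    exact (mul_le_of_le_one_right hc.le hv).trans_lt hcr
  rw [le_div_iff₀' (by positivity)]
  calc ‖c‖ ^ p * ∑ j ∈ s, ‖u j v‖ ^ p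
      = ∑ j ∈ s, ‖u j (v₀ + c • v) - u j v₀‖ ^ p := by
        simp [Finset.mul_sum, norm_smul, Real.mul_rpow]
    _ ≤ ∑ j ∈ s, 2 ^ p * (‖u j (v₀ + c • v)‖ ^ p + ‖u j v₀‖ ^ p) :=
        Finset.sum_le_sum fun j _ => norm_sub_rpow_le_two_rpow_mul hp _ _
    _ = 2 ^ p * (∑ j ∈ s, ‖u j (v₀ + c • v)‖ ^ p + ∑ j ∈ s, ‖u j v₀‖ ^ p) := by
        rw [← Finset.mul_sum, Finset.sum_add_distrib]
    _ ≤ 2 ^ p * (K + K) := by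
        gcongr
        exacts [hball hmem s, hball (Metric.mem_ball_self hr) s]

end Summability

section WeaklySummable

variable {𝕜 : Type*} [RCLike 𝕜] {E : Type*} [NormedAddCommGroup E] [NormedSpace 𝕜 E]

theorem weakLpNorm_nonneg (q : ℝ) {m : ℕ} (x : Fin m → E) : 0 ≤ weakLpNorm 𝕜 q x :=
  Real.iSup_nonneg fun _ => by positivity

theorem weakLpNorm_le {q : ℝ} (hq : 0 ≤ q) {m : ℕ} {x : Fin m → E} {K : ℝ}
    (hK : ∀ φ : E →L[𝕜] 𝕜, ‖φ‖ ≤ 1 → ∑ j, ‖φ (x j)‖ ^ q ≤ K) :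
    weakLpNorm 𝕜 q x ≤ K ^ (1 / q) := by
  have : Nonempty {φ : E →L[𝕜] 𝕜 // ‖φ‖ ≤ 1} := ⟨0, by simp⟩
  exact ciSup_le fun φ => Real.rpow_le_rpow (by positivity) (hK φ φ.2) (by positivity)

variable {κ : Type*}

variable (𝕜) in
/-- Weakly `q`-summable families: every continuous linear functional maps the family into `ℓ_q`.
The index type is arbitrary; `κ = ℕ` gives the weakly `q`-summable sequences. -/
def WeaklySummable (q : ℝ) (x : κ → E) : Prop :=
  ∀ φ : E →L[𝕜] 𝕜, Summable fun j => ‖φ (x j)‖ ^ q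

theorem WeaklySummable.option_elim {q : ℝ} {x : κ → E} (hx : WeaklySummable 𝕜 q x) (a : E) :
    WeaklySummable 𝕜 q fun j : Option κ => j.elim a x := fun φ =>
  (summable_option_elim (hx φ) (‖φ a‖ ^ q)).congr fun j => by cases j <;> rfl

theorem WeaklySummable.exists_weakLpNorm_comp_le {q : ℝ} (hq : 0 ≤ q) {x : κ → E}
    (hx : WeaklySummable 𝕜 q x) :
    ∃ K, ∀ (m : ℕ) (e : Fin m ↪ κ), weakLpNorm 𝕜 q (x ∘ e) ≤ K := by
  obtain ⟨K, hK⟩ := exists_forall_norm_le_one_sum_norm_rpow_le hq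
    (fun j => ContinuousLinearMap.apply 𝕜 𝕜 (x j)) hx
  refine ⟨K ^ (1 / q), fun m e => weakLpNorm_le hq fun φ hφ => ?_⟩
  simpa using hK φ hφ (Finset.univ.map e)

end WeaklySummable

section FullySumming

theorem exists_subset_map_arrowCongrRight {ι κ : Type*} [Fintype ι] [DecidableEq ι]
    (s : Finset (ι → κ)) :
    ∃ (m : ℕ) (e : Fin m ↪ κ), s ⊆ Finset.univ.map (e.arrowCongrRight (γ := ι)) := by
  classical
  let t : Finset κ := s.biUnion fun j => Finset.univ.image j
  have mem_t {j : ι → κ} (hj : j ∈ s) (i : ι) : j i ∈ t :=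
    Finset.mem_biUnion.2 ⟨j, hj, Finset.mem_image_of_mem j (Finset.mem_univ i)⟩
  refine ⟨t.card, t.equivFin.symm.toEmbedding.trans (.subtype _), fun j hj => ?_⟩
  refine Finset.mem_map.2 ⟨fun i => t.equivFin ⟨j i, mem_t hj i⟩, Finset.mem_univ _, ?_⟩
  ext i
  simp [Function.Embedding.arrowCongrRight_apply]

theorem map_add_sub_map_eq_sum_piecewise {R ι : Type*} [Semiring R] [Fintype ι] [DecidableEq ι]
    {E : ι → Type*} [∀ i, AddCommMonoid (E i)] [∀ i, Module R (E i)] {F : Type*} [AddCommGroup F]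
    [Module R F] (T : MultilinearMap R E F) (a x : ∀ i, E i) :
    T (a + x) - T a =
      ∑ s ∈ (Finset.univ : Finset (Finset ι)).erase ∅, T (s.piecewise x a) := by
  rw [add_comm, T.map_add_univ, ← Finset.add_sum_erase _ _ (Finset.mem_univ ∅),
    Finset.piecewise_empty, add_sub_cancel_left]

variable {𝕜 : Type*} [RCLike 𝕜] {ι : Type*} [Fintype ι] [DecidableEq ι] {E : ι → Type*}
  [∀ i, NormedAddCommGroup (E i)] [∀ i, NormedSpace 𝕜 (E i)]

variable (𝕜) in
/-- `T` is fully (multiple) `(p; q₁,…,qₙ)`-summing with constant `C`. In contrast to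
`AbsSummingWith`, the sum runs over all multi-indices instead of the diagonal. -/
def FullySummingWith {F : Type*} [SeminormedAddCommGroup F] (p : ℝ) (q : ι → ℝ) (C : ℝ)
    (T : (∀ i, E i) → F) : Prop :=
  ∀ (m : ℕ) (x : ∀ i, Fin m → E i),
    (∑ j : ι → Fin m, ‖T fun i => x i (j i)‖ ^ p) ^ (1 / p) ≤ C * ∏ i, weakLpNorm 𝕜 (q i) (x i)

variable {κ : Type*} {p C : ℝ} {q : ι → ℝ}

theorem FullySummingWith.sum_le {F : Type*} [SeminormedAddCommGroup F] {T : (∀ i, E i) → F}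
    (hT : FullySummingWith 𝕜 p q C T) (hp : 0 < p) {m : ℕ} {x : ∀ i, Fin m → E i} {K : ι → ℝ}
    (hK : ∀ i, weakLpNorm 𝕜 (q i) (x i) ≤ K i) :
    ∑ j : ι → Fin m, ‖T fun i => x i (j i)‖ ^ p ≤ (|C| * ∏ i, K i) ^ p := by
  have prod_nonneg : 0 ≤ ∏ i, weakLpNorm 𝕜 (q i) (x i) :=
    Finset.prod_nonneg fun i _ => weakLpNorm_nonneg (q i) (x i)
  have prod_le : ∏ i, weakLpNorm 𝕜 (q i) (x i) ≤ ∏ i, K i :=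
    Finset.prod_le_prod (fun i _ => weakLpNorm_nonneg (q i) (x i)) fun i _ => hK i
  rw [← Real.rpow_inv_le_iff_of_pos (by positivity)
    (mul_nonneg (abs_nonneg C) (prod_nonneg.trans prod_le)) hp, ← one_div]
  exact (hT m x).trans (mul_le_mul (le_abs_self C) prod_le prod_nonneg (abs_nonneg C))

theorem FullySummingWith.summable {F : Type*} [SeminormedAddCommGroup F] {T : (∀ i, E i) → F}
    (hT : FullySummingWith 𝕜 p q C T) (hp : 0 < p) (hq : ∀ i, 0 ≤ q i) {x : ∀ i, κ → E i}
    (hx : ∀ i, WeaklySummable 𝕜 (q i) (x i)) :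
    Summable fun j : ι → κ => ‖T fun i => x i (j i)‖ ^ p := by
  choose K hK using fun i => (hx i).exists_weakLpNorm_comp_le (hq i)
  refine summable_of_sum_le (c := (|C| * ∏ i, K i) ^ p) (fun j => by positivity) fun s => ?_
  obtain ⟨m, e, hs⟩ := exists_subset_map_arrowCongrRight s
  calc ∑ j ∈ s, ‖T fun i => x i (j i)‖ ^ p
      ≤ ∑ j ∈ Finset.univ.map e.arrowCongrRight, ‖T fun i => x i (j i)‖ ^ p :=
        Finset.sum_le_sum_of_subset_of_nonneg hs fun _ _ _ => by positivity
    _ = ∑ j : ι → Fin m, ‖T fun i => (x i ∘ e) (j i)‖ ^ p := Finset.sum_map ..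
    _ ≤ (|C| * ∏ i, K i) ^ p := hT.sum_le hp fun i => hK i m e

theorem FullySummingWith.summable_piecewise {F : Type*} [SeminormedAddCommGroup F]
    {T : (∀ i, E i) → F} (hT : FullySummingWith 𝕜 p q C T) (hp : 0 < p) (hq : ∀ i, 0 ≤ q i)
    (a : ∀ i, E i) {x : ∀ i, κ → E i} (hx : ∀ i, WeaklySummable 𝕜 (q i) (x i)) {s : Finset ι}
    (hs : s.Nonempty) : Summable fun j => ‖T (s.piecewise (fun i => x i j) a)‖ ^ p := by
  obtain ⟨i₀, hi₀⟩ := hs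
  let index (j : κ) : ι → Option κ := s.piecewise (fun _ => some j) fun _ => none
  have index_injective : Function.Injective index := fun j j' h => by
    simpa [index, hi₀] using congrFun h i₀
  refine ((hT.summable hp hq fun i => (hx i).option_elim (a i)).comp_injective
    index_injective).congr fun j => ?_
  have piecewise_eq : s.piecewise (fun i => x i j) a = fun i => (index j i).elim (a i) (x i) := by
    ext i
    by_cases hi : i ∈ s <;> simp [index, hi]
  simp only [Function.comp_apply, piecewise_eq]

theorem absSummingEverywhere_of_fullySumming_general {F : Type*} [NormedAddCommGroup F]
    [NormedSpace 𝕜 F] (hp : 0 < p) (hq : ∀ i, 0 < q i) {T : MultilinearMap 𝕜 E F}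
    (hT : FullySummingWith 𝕜 p q C T) (a : ∀ i, E i) {x : ∀ i, κ → E i}
    (hx : ∀ i, WeaklySummable 𝕜 (q i) (x i)) :
    Summable fun j => ‖T (fun i => a i + x i j) - T a‖ ^ p := by
  have expand (j : κ) : T (fun i => a i + x i j) - T a =
      ∑ s ∈ (Finset.univ : Finset (Finset ι)).erase ∅, T (s.piecewise (fun i => x i j) a) :=
    map_add_sub_map_eq_sum_piecewise T a fun i => x i j
  simp only [expand]
  exact summable_norm_sum_rpow hp fun s hs => hT.summable_piecewise hp (fun i => (hq i).le) a hx
    (Finset.nonempty_iff_ne_empty.2 (Finset.ne_of_mem_erase hs))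

end FullySumming

/-- Every fully (multiple) `p`-summing continuous `n`-linear map (`n ≥ 2`)
is absolutely `p`-summing at every point: for every point `(a₁,…,aₙ)` and all weakly
`p`-summable sequences `(xⱼ⁽ᵏ⁾)ⱼ`, the series
`∑ⱼ ‖T(a₁ + xⱼ⁽¹⁾, …, aₙ + xⱼ⁽ⁿ⁾) − T(a₁,…,aₙ)‖^p` converges. -/
theorem absSummingEverywhere_of_fullySumming {𝕜 : Type*} [RCLike 𝕜] {E : Type*}
    [NormedAddCommGroup E] [NormedSpace 𝕜 E] [CompleteSpace E]
    {F : Type*} [NormedAddCommGroup F] [NormedSpace 𝕜 F] [CompleteSpace F]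
    {n : ℕ} (hn : 2 ≤ n) {p : ℝ} (hp : 0 < p)
    (T : ContinuousMultilinearMap 𝕜 (fun _ : Fin n => E) F)
    (hT : ∃ C, 0 ≤ C ∧ ∀ (m : ℕ) (x : Fin n → Fin m → E),
      (∑ j : Fin n → Fin m, ‖T (fun i => x i (j i))‖ ^ p) ^ (1 / p) ≤
        C * ∏ k, weakLpNorm 𝕜 p (x k)) :
    ∀ (a : Fin n → E) (x : Fin n → ℕ → E),
      (∀ k, ∀ φ : E →L[𝕜] 𝕜, Summable fun j => ‖φ (x k j)‖ ^ p) →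
      Summable fun j => ‖T (fun i => a i + x i j) - T a‖ ^ p := by
  obtain ⟨C, -, hT⟩ := hT
  exact fun a x hx => absSummingEverywhere_of_fullySumming_general (T := T.toMultilinearMap)
    hp (fun _ => hp) hT a hx
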